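/- In the r-state i.i.d. model with m(n) = ⌈c·n^{2/(r−1)+α}⌉ and l(n) = ⌈c'·n^{2/(r−1)+α}⌉ for some constants c > 0, c' > 0 and α > 0, and with Δ'_n = n^{−(1/(r−1)+α/4)}, the empirical frequency vectors satisfy P(⋃_{u=2}^n {max_{1 ≤ i ≤ r−1} |X̄_u(i) − W̄_1(i)| ≤ Δ'_n}) → 0 as n → ∞, where X̄_u(i) = |{k ≤ m : X_u(k) = i}|/m and W̄_u(i) = |{k ≤ l : W_u(k) = i}|/l. -/

import Mathlib

open MeasureTheory ProbabilityTheory Filter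
open scoped ENNReal NNReal

/-- Discrete measure on `Fin r` assigning mass `q i` to the point `i`. -/
noncomputable def catMeasure (r : ℕ) (q : Fin r → ℝ) : Measure (Fin r) :=
  ∑ i : Fin r, ENNReal.ofReal (q i) • Measure.dirac i

/-- Extend a parameter vector `(p 1, …, p (r-1))` (probabilities of the values `1, …, r-1`)
to a full probability vector on `{0, 1, …, r-1}`, value `0` receiving the remaining mass. -/
noncomputable def fullProb (r : ℕ) (p : Fin (r - 1) → ℝ) : Fin r → ℝ := fun i =>
  if h : (i : ℕ) = 0 then 1 - ∑ j, p j
  else p ⟨(i : ℕ) - 1, by have := i.isLt; omega⟩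

/-- The open region `{x ∈ (0,1)^d : xᵢ > 0, x₁ + ⋯ + x_d < 1}` of admissible parameters. -/
def simplexRegion (d : ℕ) : Set (Fin d → ℝ) :=
  {x | (∀ i, 0 < x i) ∧ ∑ i, x i < 1}

/-- Joint law of (parameters, actual traces, training traces) in the `r`-state i.i.d. model:
the parameter vectors `p u` are i.i.d. with law `μP`, and conditionally on the parameters the
`n` actual traces (of length `m`) and training traces (of length `l`) consist of i.i.d.
samples from `{0, …, r-1}` where value `i ≥ 1` has probability `p u i` and value `0` the
remaining probability; all traces are mutually independent. -/
noncomputable def rStateLaw (n m l r : ℕ) (μP : Measure (Fin (r - 1) → ℝ)) :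
    Measure ((Fin n → Fin (r - 1) → ℝ) × (Fin n → Fin m → Fin r) × (Fin n → Fin l → Fin r)) :=
  (Measure.pi fun _ : Fin n => μP).bind fun p =>
    (Measure.dirac p).prod
      ((Measure.pi fun u : Fin n =>
          Measure.pi fun _ : Fin m => catMeasure r (fullProb r (p u))).prod
        (Measure.pi fun u : Fin n =>
          Measure.pi fun _ : Fin l => catMeasure r (fullProb r (p u))))

/-- Empirical frequency of the value `i` in a sample `x` of size `m`. -/
noncomputable def empFreq {m r : ℕ} (x : Fin m → Fin r) (i : Fin r) : ℝ :=
  ((Finset.univ.filter fun k => x k = i).card : ℝ) / m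

/-! Hoeffding's inequality puts all empirical frequencies of user `u` and of user `1` within
`ε = n ^ (-κ)` of the true parameters, outside an event of probability `O(exp (-2 m ε ^ 2))` (and
likewise with `l` in place of `m`). On that good event `ε`-close frequency vectors force `p_u` and
`p_1` to be `3ε`-close, which, `p_u` and `p_1` being independent, has probability `O(ε ^ s)` as soon
as balls of radius `ρ` have mass `O(ρ ^ s)`. The union bound over `u` costs a factor `n`, which is
affordable because `κ s > 1` and `m ε ^ 2` grows at least like a positive power of `n`. A bounded
density gives `s = r - 1`. -/

section GeneralMeasure

variable {α β ι : Type*} [MeasurableSpace α] [MeasurableSpace β] [Fintype ι]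

theorem measureReal_pi_abs_sum_ge_le_of_hasSubgaussianMGF {ν : Measure α} [IsProbabilityMeasure ν]
    {g : α → ℝ} (hg : AEMeasurable g ν) {c : ℝ≥0} (hsub : HasSubgaussianMGF g c ν) {t : ℝ}
    (ht : 0 ≤ t) :
    (Measure.pi fun _ : ι => ν).real {x | t ≤ |∑ i, g (x i)|} ≤
      2 * Real.exp (-t ^ 2 / (2 * (Fintype.card ι * c))) := by
  have upper_tail : ∀ g : α → ℝ, AEMeasurable g ν → HasSubgaussianMGF g c ν →
      (Measure.pi fun _ : ι => ν).real {x | t ≤ ∑ i, g (x i)} ≤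
        Real.exp (-t ^ 2 / (2 * (Fintype.card ι * c))) := by
    intro g hg hsub
    have hcoord (i : ι) :
        HasSubgaussianMGF (fun x : ι → α => g (x i)) c (Measure.pi fun _ => ν) := by
      have hmp := measurePreserving_eval (fun _ : ι => ν) i
      exact .of_map (Y := Function.eval i) hmp.measurable.aemeasurable (by rwa [hmp.map_eq])
    simpa using HasSubgaussianMGF.measure_sum_ge_le_of_iIndepFun
      (iIndepFun_pi fun _ : ι => hg) (s := Finset.univ) (fun i _ => hcoord i) ht
  have hcover : {x : ι → α | t ≤ |∑ i, g (x i)|} ⊆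
      {x | t ≤ ∑ i, g (x i)} ∪ {x | t ≤ ∑ i, (-g) (x i)} := by
    intro x hx
    simpa [Finset.sum_neg_distrib, le_abs] using hx
  calc
    _ ≤ _ := measureReal_mono hcover
    _ ≤ _ := measureReal_union_le _ _
    _ ≤ _ := add_le_add (upper_tail g hg hsub) (upper_tail (-g) hg.neg hsub.neg)
    _ = _ := (two_mul _).symm

theorem bind_apply_le_add {μ : Measure α} [IsProbabilityMeasure μ] {κ : α → Measure β}
    {E : Set β} {B : Set α} {δ : ℝ≥0∞} (hE : MeasurableSet E) (hB : MeasurableSet B)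
    (hone : ∀ᵐ a ∂μ, κ a E ≤ 1) (hδ : ∀ᵐ a ∂μ, a ∉ B → κ a E ≤ δ) :
    μ.bind κ E ≤ δ + μ B := by
  have hpointwise : ∀ᵐ a ∂μ, κ a E ≤ δ + B.indicator 1 a := by
    filter_upwards [hone, hδ] with a hone hδ
    by_cases ha : a ∈ B
    · simpa [ha] using hone.trans le_add_self
    · simpa [ha] using hδ ha
  calc μ.bind κ E ≤ ∫⁻ a, κ a E ∂μ := Measure.bind_apply_le κ hE
    _ ≤ ∫⁻ a, (δ + B.indicator 1 a) ∂μ := lintegral_mono_ae hpointwise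
    _ = δ + μ B := by
      rw [lintegral_add_left measurable_const, lintegral_indicator_one hB]
      simp

theorem ae_withDensity_mem_of_eq_zero {μ : Measure α} {g : α → ℝ≥0∞} {s : Set α}
    (hs : MeasurableSet s) (hg : ∀ x ∉ s, g x = 0) : ∀ᵐ x ∂μ.withDensity g, x ∈ s := by
  rw [ae_iff]
  change μ.withDensity g sᶜ = 0
  rw [withDensity_apply _ hs.compl, setLIntegral_congr_fun hs.compl hg, lintegral_zero]

theorem withDensity_closedBall_le {g : (ι → ℝ) → ℝ≥0∞} {C : ℝ≥0∞} (hg : ∀ x, g x ≤ C)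
    (x : ι → ℝ) {ρ : ℝ} (hρ : 0 ≤ ρ) :
    (volume.withDensity g) (Metric.closedBall x ρ) ≤
      C * ENNReal.ofReal ((2 * ρ) ^ Fintype.card ι) := by
  have hle : volume.withDensity g ≤ C • volume :=
    (withDensity_mono (.of_forall hg)).trans_eq (withDensity_const C)
  simpa [Real.volume_pi_closedBall x hρ] using hle (Metric.closedBall x ρ)

theorem withDensity_ofReal_real_closedBall_le {f : (ι → ℝ) → ℝ} {s : Set (ι → ℝ)} {δ : ℝ}
    (hf0 : ∀ x ∉ s, f x = 0) (hf : ∀ x ∈ s, f x ≤ δ) (x : ι → ℝ) {ρ : ℝ} (hρ : 0 ≤ ρ) :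
    (volume.withDensity fun x => ENNReal.ofReal (f x)).real (Metric.closedBall x ρ) ≤
      |δ| * (2 * ρ) ^ Fintype.card ι := by
  have hbound (x) : f x ≤ |δ| := by
    by_cases hx : x ∈ s
    · exact (hf x hx).trans (le_abs_self δ)
    · exact (hf0 x hx).trans_le (abs_nonneg δ)
  refine ENNReal.toReal_le_of_le_ofReal (by positivity) ?_
  rw [ENNReal.ofReal_mul (abs_nonneg δ)]
  exact withDensity_closedBall_le (fun x => ENNReal.ofReal_le_ofReal (hbound x)) x hρ

variable {E : Type*} [PseudoMetricSpace E] [SecondCountableTopology E] [MeasurableSpace E]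
  [OpensMeasurableSpace E]

theorem measure_dist_le_of_indepFun {μ : Measure α} [IsProbabilityMeasure μ] {X Y : α → E}
    (hX : AEMeasurable X μ) (hY : AEMeasurable Y μ) (hXY : IndepFun X Y μ) {ρ : ℝ} {K : ℝ≥0∞}
    (hK : ∀ y, μ.map X (Metric.closedBall y ρ) ≤ K) :
    μ {ω | dist (X ω) (Y ω) ≤ ρ} ≤ K := by
  have hclose : MeasurableSet {z : E × E | dist z.1 z.2 ≤ ρ} :=
    measurableSet_le (by fun_prop) measurable_const
  have := Measure.isProbabilityMeasure_map hY
  calc μ {ω | dist (X ω) (Y ω) ≤ ρ}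
      = μ.map (fun ω => (X ω, Y ω)) {z | dist z.1 z.2 ≤ ρ} :=
        (Measure.map_apply_of_aemeasurable (hX.prodMk hY) hclose).symm
    _ = ∫⁻ y, μ.map X (Metric.closedBall y ρ) ∂μ.map Y := by
        rw [(indepFun_iff_map_prod_eq_prod_map_map hX hY).1 hXY, Measure.prod_apply_symm hclose]
        rfl
    _ ≤ ∫⁻ _, K ∂μ.map Y := lintegral_mono hK
    _ = K := by simp

theorem measure_pi_dist_le {μ : Measure E} [IsProbabilityMeasure μ] {ρ : ℝ} {K : ℝ≥0∞}
    (hK : ∀ x, μ (Metric.closedBall x ρ) ≤ K) {i j : ι} (hij : i ≠ j) :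
    (Measure.pi fun _ : ι => μ) {p | dist (p i) (p j) ≤ ρ} ≤ K := by
  have hind := (iIndepFun_pi (μ := fun _ : ι => μ) (X := fun _ x => x)
    fun _ => aemeasurable_id').indepFun hij
  refine measure_dist_le_of_indepFun (measurable_pi_apply i).aemeasurable
    (measurable_pi_apply j).aemeasurable hind fun x => ?_
  rw [(measurePreserving_eval (fun _ : ι => μ) i).map_eq]
  exact hK x

end GeneralMeasure

section Simplex

theorem isOpen_simplexRegion (d : ℕ) : IsOpen (simplexRegion d) := by
  have hpos : IsOpen {x : Fin d → ℝ | ∀ i, 0 < x i} := by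
    simp only [Set.ofPred_forall]
    exact isOpen_iInter_of_finite fun i => isOpen_lt continuous_const (continuous_apply i)
  exact hpos.inter (isOpen_lt (continuous_finsetSum _ fun i _ => continuous_apply i)
    continuous_const)

variable {r : ℕ}

theorem fullProb_succ (p : Fin (r - 1) → ℝ) (j : Fin (r - 1)) :
    fullProb r p ⟨j + 1, by omega⟩ = p j := by
  simp [fullProb]

theorem sum_fullProb [NeZero r] (p : Fin (r - 1) → ℝ) : ∑ i, fullProb r p i = 1 := by
  obtain ⟨d, rfl⟩ := Nat.exists_eq_succ_of_ne_zero (NeZero.ne r)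
  simp [Fin.sum_univ_succ, fullProb]

theorem fullProb_mem_stdSimplex [NeZero r] {p : Fin (r - 1) → ℝ}
    (hp : p ∈ simplexRegion (r - 1)) : fullProb r p ∈ stdSimplex ℝ (Fin r) := by
  refine ⟨fun i => ?_, sum_fullProb p⟩
  unfold fullProb
  split_ifs
  · linarith [hp.2]
  · exact (hp.1 _).le

theorem ae_withDensity_fullProb_mem_stdSimplex [NeZero r] {μ : Measure (Fin (r - 1) → ℝ)}
    {g : (Fin (r - 1) → ℝ) → ℝ≥0∞} (hg : ∀ x ∉ simplexRegion (r - 1), g x = 0) :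
    ∀ᵐ p ∂μ.withDensity g, fullProb r p ∈ stdSimplex ℝ (Fin r) :=
  (ae_withDensity_mem_of_eq_zero (isOpen_simplexRegion _).measurableSet hg).mono
    fun _ => fullProb_mem_stdSimplex

theorem isProbabilityMeasure_catMeasure {q : Fin r → ℝ} (hq : q ∈ stdSimplex ℝ (Fin r)) :
    IsProbabilityMeasure (catMeasure r q) where
  measure_univ := by
    simp [catMeasure, ← ENNReal.ofReal_sum_of_nonneg fun i _ => hq.1 i, hq.2]

theorem catMeasure_real_singleton {q : Fin r → ℝ} {i : Fin r} (hq : 0 ≤ q i) :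
    (catMeasure r q).real {i} = q i := by
  simpa [catMeasure, measureReal_def, Set.indicator_apply] using hq

end Simplex

section EmpiricalFrequency

variable {n m l r : ℕ}

/-- Hoeffding's bound, summed over the `r` values, on the probability that some empirical frequency
of an i.i.d. sample of size `m` from `Fin r` misses its mean by more than `ε`. -/
noncomputable def freqTail (r m : ℕ) (ε : ℝ) : ℝ :=
  r * (2 * Real.exp (-2 * m * ε ^ 2))

/-- The empirical frequency vectors of two samples are within sup-distance `ε` of each other. As in
the parametrization of the model by `p 1, …, p (r-1)`, the value `0` is left out. -/
def FreqClose (ε : ℝ) (x : Fin m → Fin r) (w : Fin l → Fin r) : Prop :=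
  ∀ i : Fin r, (i : ℕ) ≠ 0 → |empFreq x i - empFreq w i| ≤ ε

/-- The joint law of the length-`m` traces of all users, conditionally on their parameters `p`. -/
noncomputable def traceLaw (m : ℕ) (p : Fin n → Fin (r - 1) → ℝ) :
    Measure (Fin n → Fin m → Fin r) :=
  Measure.pi fun u => Measure.pi fun _ => catMeasure r (fullProb r (p u))

theorem sum_indicator_sub_eq_mul_empFreq_sub (x : Fin m → Fin r) (i : Fin r) (q : ℝ) :
    ∑ k, (Set.indicator {i} 1 (x k) - q) = m * (empFreq x i - q) := by
  rcases Nat.eq_zero_or_pos m with rfl | hm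
  · simp
  · have hcount : ∑ k, Set.indicator {i} (1 : Fin r → ℝ) (x k) =
        (Finset.univ.filter fun k => x k = i).card := by
      simp [Set.indicator_apply]
    rw [Finset.sum_sub_distrib, hcount, empFreq, mul_sub, mul_div_cancel₀ _ (by positivity)]
    simp

theorem measureReal_pi_lt_abs_empFreq_sub_le (ν : Measure (Fin r)) [IsProbabilityMeasure ν]
    (i : Fin r) {ε : ℝ} (hε : 0 ≤ ε) :
    (Measure.pi fun _ : Fin m => ν).real {x | ε < |empFreq x i - ν.real {i}|} ≤
      2 * Real.exp (-2 * m * ε ^ 2) := by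
  set g : Fin r → ℝ := Set.indicator {i} 1
  have hmean : ∫ y, g y ∂ν = ν.real {i} := integral_indicator_one (measurableSet_singleton i)
  have hsub : HasSubgaussianMGF (fun y => g y - ν.real {i}) ((‖(1 : ℝ) - 0‖₊ / 2) ^ 2) ν := by
    rw [← hmean]
    refine hasSubgaussianMGF_of_mem_Icc (measurable_of_finite g).aemeasurable
      (.of_forall fun y => ?_)
    by_cases hy : y = i <;> simp [g, hy]
  have hevent : {x : Fin m → Fin r | ε < |empFreq x i - ν.real {i}|} ⊆
      {x | m * ε ≤ |∑ k, (g (x k) - ν.real {i})|} := by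
    intro x (hx : ε < _)
    simp only [Set.mem_ofPred_eq, g, sum_indicator_sub_eq_mul_empFreq_sub, abs_mul, Nat.abs_cast]
    gcongr
  have hexponent : -2 * m * ε ^ 2 =
      -(m * ε) ^ 2 / (2 * (Fintype.card (Fin m) * ((‖(1 : ℝ) - 0‖₊ / 2) ^ 2 : ℝ≥0))) := by
    rcases Nat.eq_zero_or_pos m with rfl | hm
    · simp
    · simp only [Fintype.card_fin, sub_zero, nnnorm_one, NNReal.coe_pow, NNReal.coe_div,
        NNReal.coe_one, NNReal.coe_ofNat]
      field_simp
  rw [hexponent]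
  exact (measureReal_mono hevent).trans (measureReal_pi_abs_sum_ge_le_of_hasSubgaussianMGF
    (measurable_of_finite _).aemeasurable hsub (mul_nonneg m.cast_nonneg hε))

theorem isProbabilityMeasure_traceLaw {p : Fin n → Fin (r - 1) → ℝ}
    (hp : ∀ u, fullProb r (p u) ∈ stdSimplex ℝ (Fin r)) :
    IsProbabilityMeasure (traceLaw m p) := by
  have := fun u => isProbabilityMeasure_catMeasure (hp u)
  unfold traceLaw
  infer_instance

theorem traceLaw_real_exists_lt_abs_empFreq_sub_le {p : Fin n → Fin (r - 1) → ℝ}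
    (hp : ∀ u, fullProb r (p u) ∈ stdSimplex ℝ (Fin r)) (u : Fin n) {ε : ℝ} (hε : 0 ≤ ε) :
    (traceLaw m p).real {x | ∃ i, ε < |empFreq (x u) i - fullProb r (p u) i|} ≤
      freqTail r m ε := by
  have := fun u => isProbabilityMeasure_catMeasure (hp u)
  have hsingle (i : Fin r) :
      (traceLaw m p).real {x | ε < |empFreq (x u) i - fullProb r (p u) i|} ≤
        2 * Real.exp (-2 * m * ε ^ 2) := by
    have hmarginal := (measurePreserving_eval (fun u : Fin n =>
      Measure.pi fun _ : Fin m => catMeasure r (fullProb r (p u))) u).measureReal_preimage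
        (s := {x | ε < |empFreq x i - fullProb r (p u) i|})
        MeasurableSet.of_discrete.nullMeasurableSet
    have hdeviation := measureReal_pi_lt_abs_empFreq_sub_le (m := m)
      (catMeasure r (fullProb r (p u))) i hε
    rw [catMeasure_real_singleton ((hp u).1 i)] at hdeviation
    exact hmarginal.trans_le hdeviation
  calc (traceLaw m p).real {x | ∃ i, ε < |empFreq (x u) i - fullProb r (p u) i|}
      ≤ ∑ i, (traceLaw m p).real {x | ε < |empFreq (x u) i - fullProb r (p u) i|} := by
        rw [Set.ofPred_exists]
        exact measureReal_iUnion_fintype_le _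
    _ ≤ ∑ _i : Fin r, 2 * Real.exp (-2 * m * ε ^ 2) := Finset.sum_le_sum fun i _ => hsingle i
    _ = freqTail r m ε := by simp [freqTail]

theorem dist_le_of_freqClose {p q : Fin (r - 1) → ℝ} {x : Fin m → Fin r} {w : Fin l → Fin r}
    {ε : ℝ} (hε : 0 ≤ ε) (hclose : FreqClose ε x w)
    (hx : ∀ i, |empFreq x i - fullProb r p i| ≤ ε) (hw : ∀ i, |empFreq w i - fullProb r q i| ≤ ε) :
    dist p q ≤ 3 * ε := by
  refine (dist_pi_le_iff (by positivity)).2 fun j => ?_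
  have hxj := hx ⟨j + 1, by omega⟩
  have hwj := hw ⟨j + 1, by omega⟩
  have hxwj := hclose ⟨j + 1, by omega⟩ (Nat.succ_ne_zero _)
  rw [fullProb_succ, abs_le] at hxj hwj
  rw [abs_le] at hxwj
  rw [Real.dist_eq, abs_le]
  constructor <;> linarith

theorem traceLaw_prod_real_freqClose_le {p : Fin n → Fin (r - 1) → ℝ}
    (hp : ∀ u, fullProb r (p u) ∈ stdSimplex ℝ (Fin r)) {ε : ℝ} (hε : 0 ≤ ε) {u v : Fin n}
    (hfar : 3 * ε < dist (p u) (p v)) :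
    ((traceLaw m p).prod (traceLaw l p)).real {xw | FreqClose ε (xw.1 u) (xw.2 v)} ≤
      freqTail r m ε + freqTail r l ε := by
  have := isProbabilityMeasure_traceLaw (m := m) hp
  have := isProbabilityMeasure_traceLaw (m := l) hp
  set A : Set (Fin n → Fin m → Fin r) := {x | ∃ i, ε < |empFreq (x u) i - fullProb r (p u) i|}
  set B : Set (Fin n → Fin l → Fin r) := {w | ∃ i, ε < |empFreq (w v) i - fullProb r (p v) i|}
  have hcover : {xw : (Fin n → Fin m → Fin r) × (Fin n → Fin l → Fin r) |
      FreqClose ε (xw.1 u) (xw.2 v)} ⊆ A ×ˢ Set.univ ∪ Set.univ ×ˢ B := by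
    rintro ⟨x, w⟩ hclose
    by_contra hgood
    simp only [Set.mem_union, Set.mem_prod, Set.mem_univ, and_true, true_and, not_or, A, B,
      Set.mem_ofPred_eq, not_exists, not_lt] at hgood
    exact hfar.not_ge (dist_le_of_freqClose hε hclose hgood.1 hgood.2)
  calc
    _ ≤ _ := measureReal_mono hcover
    _ ≤ _ := measureReal_union_le _ _
    _ = (traceLaw m p).real A + (traceLaw l p).real B := by simp [measureReal_prod_prod]
    _ ≤ _ := add_le_add (traceLaw_real_exists_lt_abs_empFreq_sub_le hp u hε)
      (traceLaw_real_exists_lt_abs_empFreq_sub_le hp v hε)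

end EmpiricalFrequency

section JointLaw

variable {n m l r : ℕ} {μP : Measure (Fin (r - 1) → ℝ)} [IsProbabilityMeasure μP] {ε K : ℝ}

theorem rStateLaw_freqClose_le (hsupp : ∀ᵐ p ∂μP, fullProb r p ∈ stdSimplex ℝ (Fin r))
    (hε : 0 ≤ ε) (hK : ∀ x, μP.real (Metric.closedBall x (3 * ε)) ≤ K) {u v : Fin n}
    (huv : u ≠ v) :
    rStateLaw n m l r μP {z | FreqClose ε (z.2.1 u) (z.2.2 v)} ≤
      ENNReal.ofReal (freqTail r m ε + freqTail r l ε + K) := by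
  set S : Set ((Fin n → Fin m → Fin r) × (Fin n → Fin l → Fin r)) :=
    {xw | FreqClose ε (xw.1 u) (xw.2 v)}
  have hparams : ∀ᵐ p ∂Measure.pi fun _ : Fin n => μP,
      ∀ u, fullProb r (p u) ∈ stdSimplex ℝ (Fin r) :=
    ae_all_iff.2 fun u =>
      (measurePreserving_eval (fun _ : Fin n => μP) u).quasiMeasurePreserving.ae hsupp
  have hK' (x) : μP (Metric.closedBall x (3 * ε)) ≤ ENNReal.ofReal K :=
    (ofReal_measureReal).symm.trans_le (ENNReal.ofReal_le_ofReal (hK x))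
  have hcond (p : Fin n → Fin (r - 1) → ℝ) :
      (Measure.dirac p).prod ((traceLaw m p).prod (traceLaw l p)) (Prod.snd ⁻¹' S) =
        (traceLaw m p).prod (traceLaw l p) S := by
    rw [← Set.univ_prod, Measure.prod_prod, measure_univ, one_mul]
  have hbind : rStateLaw n m l r μP (Prod.snd ⁻¹' S) ≤
      ENNReal.ofReal (freqTail r m ε + freqTail r l ε) +
        (Measure.pi fun _ : Fin n => μP) {p | dist (p u) (p v) ≤ 3 * ε} := by
    refine bind_apply_le_add (measurable_snd .of_discrete)
      (measurableSet_le (by fun_prop) measurable_const) ?_ ?_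
    · filter_upwards [hparams] with p hp
      have := isProbabilityMeasure_traceLaw (m := m) hp
      have := isProbabilityMeasure_traceLaw (m := l) hp
      exact (hcond p).trans_le prob_le_one
    · filter_upwards [hparams] with p hp hfar
      have := isProbabilityMeasure_traceLaw (m := m) hp
      have := isProbabilityMeasure_traceLaw (m := l) hp
      refine (hcond p).trans_le ?_
      rw [← ofReal_measureReal]
      exact ENNReal.ofReal_le_ofReal (traceLaw_prod_real_freqClose_le hp hε (not_le.1 hfar))
  refine hbind.trans ((add_le_add_right (measure_pi_dist_le hK' huv) _).trans_eq ?_)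
  exact (ENNReal.ofReal_add (by unfold freqTail; positivity)
    (measureReal_nonneg.trans (hK 0))).symm

theorem rStateLaw_exists_ne_freqClose_le
    (hsupp : ∀ᵐ p ∂μP, fullProb r p ∈ stdSimplex ℝ (Fin r))
    (hε : 0 ≤ ε) (hK : ∀ x, μP.real (Metric.closedBall x (3 * ε)) ≤ K) (v : Fin n) :
    rStateLaw n m l r μP {z | ∃ u, u ≠ v ∧ FreqClose ε (z.2.1 u) (z.2.2 v)} ≤
      ENNReal.ofReal (n * (freqTail r m ε + freqTail r l ε + K)) := by
  have hunion : {z : (Fin n → Fin (r - 1) → ℝ) × (Fin n → Fin m → Fin r) ×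
      (Fin n → Fin l → Fin r) | ∃ u, u ≠ v ∧ FreqClose ε (z.2.1 u) (z.2.2 v)} =
      ⋃ u ∈ Finset.univ.erase v, {z | FreqClose ε (z.2.1 u) (z.2.2 v)} := by
    ext z
    simp
  rw [hunion]
  calc
    _ ≤ _ := measure_biUnion_finset_le _ _
    _ ≤ ∑ _u ∈ Finset.univ.erase v, ENNReal.ofReal (freqTail r m ε + freqTail r l ε + K) :=
      Finset.sum_le_sum fun _ hu => rStateLaw_freqClose_le hsupp hε hK (Finset.ne_of_mem_erase hu)
    _ ≤ ∑ _u : Fin n, ENNReal.ofReal (freqTail r m ε + freqTail r l ε + K) :=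
      Finset.sum_le_sum_of_subset (Finset.erase_subset _ _)
    _ = _ := by simp [ENNReal.ofReal_mul]

end JointLaw

section Asymptotics

theorem tendsto_natCast_mul_exp_neg_mul_rpow {A θ : ℝ} (hA : 0 < A) (hθ : 0 < θ) :
    Tendsto (fun n : ℕ => (n : ℝ) * Real.exp (-A * (n : ℝ) ^ θ)) atTop (nhds 0) := by
  have hpow : Tendsto (fun n : ℕ => (n : ℝ) ^ θ) atTop atTop :=
    (tendsto_rpow_atTop hθ).comp tendsto_natCast_atTop_atTop
  refine ((tendsto_rpow_mul_exp_neg_mul_atTop_nhds_zero (1 / θ) A hA).comp hpow).congr fun n => ?_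
  simp only [Function.comp_apply]
  rw [← Real.rpow_mul n.cast_nonneg, mul_one_div_cancel hθ.ne', Real.rpow_one]

theorem tendsto_natCast_mul_freqTail (r : ℕ) {m : ℕ → ℕ} {c γ κ : ℝ} (hc : 0 < c)
    (hγ : 2 * κ < γ) (hm : ∀ᶠ n : ℕ in atTop, c * (n : ℝ) ^ γ ≤ m n) :
    Tendsto (fun n : ℕ => (n : ℝ) * freqTail r (m n) ((n : ℝ) ^ (-κ))) atTop (nhds 0) := by
  have hlim := (tendsto_natCast_mul_exp_neg_mul_rpow (A := 2 * c) (by positivity)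
    (sub_pos.2 hγ)).const_mul (2 * r : ℝ)
  rw [mul_zero] at hlim
  refine squeeze_zero' (.of_forall fun n => by unfold freqTail; positivity) ?_ hlim
  filter_upwards [hm, eventually_gt_atTop 0] with n hmn hn
  have hn' : (0 : ℝ) < n := Nat.cast_pos.2 hn
  have hexponent : c * (n : ℝ) ^ (γ - 2 * κ) ≤ m n * ((n : ℝ) ^ (-κ)) ^ 2 := by
    calc c * (n : ℝ) ^ (γ - 2 * κ) = c * (n : ℝ) ^ γ * ((n : ℝ) ^ (-κ)) ^ 2 := by
          rw [← Real.rpow_mul_natCast hn'.le, mul_assoc, ← Real.rpow_add hn']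
          push_cast
          ring_nf
      _ ≤ m n * ((n : ℝ) ^ (-κ)) ^ 2 := by gcongr
  calc (n : ℝ) * freqTail r (m n) ((n : ℝ) ^ (-κ))
      = 2 * r * (n * Real.exp (-2 * (m n * ((n : ℝ) ^ (-κ)) ^ 2))) := by
        rw [freqTail]
        ring_nf
    _ ≤ 2 * r * (n * Real.exp (-2 * (c * (n : ℝ) ^ (γ - 2 * κ)))) := by
        gcongr 2 * r * (n * Real.exp ?_)
        linarith
    _ = 2 * r * (n * Real.exp (-(2 * c) * (n : ℝ) ^ (γ - 2 * κ))) := by ring_nf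

theorem tendsto_natCast_mul_const_mul_rpow {C a κ s : ℝ} (ha : 0 ≤ a) (hκ : 1 < κ * s) :
    Tendsto (fun n : ℕ => (n : ℝ) * (C * (a * (n : ℝ) ^ (-κ)) ^ s)) atTop (nhds 0) := by
  have hlim := ((tendsto_rpow_neg_atTop (sub_pos.2 hκ)).comp
    tendsto_natCast_atTop_atTop).const_mul (C * a ^ s)
  rw [mul_zero] at hlim
  refine hlim.congr' ?_
  filter_upwards [eventually_gt_atTop 0] with n hn
  have hn' : (0 : ℝ) < n := Nat.cast_pos.2 hn
  have hpow : (n : ℝ) ^ (-(κ * s - 1)) = n * ((n : ℝ) ^ (-κ)) ^ s := by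
    rw [← Real.rpow_mul hn'.le, ← Real.rpow_one_add' hn'.le (by linarith)]
    ring_nf
  rw [Function.comp_apply, hpow, Real.mul_rpow ha (by positivity)]
  ring

end Asymptotics

theorem r_state_other_users_freq_far_general
    {r : ℕ} {μP : Measure (Fin (r - 1) → ℝ)} [IsProbabilityMeasure μP]
    (hsupp : ∀ᵐ p ∂μP, fullProb r p ∈ stdSimplex ℝ (Fin r))
    {C s κ γ c c' : ℝ}
    (hball : ∀ x ρ, 0 ≤ ρ → μP.real (Metric.closedBall x ρ) ≤ C * ρ ^ s)
    (hκ : 1 < κ * s) (hγ : 2 * κ < γ) (hc : 0 < c) (hc' : 0 < c') {m l : ℕ → ℕ}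
    (hm : ∀ᶠ n : ℕ in atTop, c * (n : ℝ) ^ γ ≤ m n)
    (hl : ∀ᶠ n : ℕ in atTop, c' * (n : ℝ) ^ γ ≤ l n)
    {Ω : ℕ → Type*} {mΩ : ∀ n, MeasurableSpace (Ω n)} {μ : ∀ n, Measure (Ω n)}
    {P : ∀ n, Ω n → Fin n → Fin (r - 1) → ℝ}
    {X : ∀ n, Ω n → Fin n → Fin (m n) → Fin r}
    {W : ∀ n, Ω n → Fin n → Fin (l n) → Fin r}
    (hlaw : ∀ n, HasLaw (fun ω => (P n ω, X n ω, W n ω)) (rStateLaw n (m n) (l n) r μP) (μ n)) :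
    Tendsto (fun n => μ n {ω | ∃ (hn : 0 < n) (u : Fin n), u ≠ ⟨0, hn⟩ ∧
        FreqClose ((n : ℝ) ^ (-κ)) (X n ω u) (W n ω ⟨0, hn⟩)})
      atTop (nhds 0) := by
  have hreal : Tendsto (fun n : ℕ => (n : ℝ) * (freqTail r (m n) ((n : ℝ) ^ (-κ)) +
      freqTail r (l n) ((n : ℝ) ^ (-κ)) + C * (3 * (n : ℝ) ^ (-κ)) ^ s)) atTop (nhds 0) := by
    simpa [mul_add] using ((tendsto_natCast_mul_freqTail r hc hγ hm).add
      (tendsto_natCast_mul_freqTail r hc' hγ hl)).add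
      (tendsto_natCast_mul_const_mul_rpow (C := C) zero_le_three hκ)
  have hbound := ENNReal.tendsto_ofReal hreal
  rw [ENNReal.ofReal_zero] at hbound
  refine tendsto_of_tendsto_of_tendsto_of_le_of_le' tendsto_const_nhds hbound
    (.of_forall fun _ => zero_le) ?_
  filter_upwards [eventually_gt_atTop 0] with n hn
  refine le_trans ?_ (rStateLaw_exists_ne_freqClose_le hsupp (by positivity)
    (fun x => hball x _ (by positivity)) ⟨0, hn⟩)
  rw [← (hlaw n).map_eq]
  refine (measure_mono ?_).trans (Measure.le_map_apply (hlaw n).aemeasurable _)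
  rintro ω ⟨_, u, hu, hclose⟩
  exact ⟨u, hu, hclose⟩

/-- **Separation of the other users' empirical frequency vectors from user 1's training
frequency vector, in the `r`-state i.i.d. model.**  With `m n = ⌈c n^{2/(r-1)+α}⌉`,
`l n = ⌈c' n^{2/(r-1)+α}⌉` and `Δ'_n = n^{-(1/(r-1)+α/4)}`, the empirical frequency
vectors satisfy `P(⋃_{u=2}^n {max_{1 ≤ i ≤ r-1} |X̄_u(i) − W̄_1(i)| ≤ Δ'_n}) → 0` as
`n → ∞`.  (Since `Y_{Π(u)} = X_u` under anonymization, `X̄_u` is the anonymized empirical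
frequency vector `Ȳ_{Π(u)}`.) -/
theorem r_state_other_users_freq_far
    (r : ℕ) (hr : 2 ≤ r)
    (f : (Fin (r - 1) → ℝ) → ℝ) (δ₁ δ₂ : ℝ) (hδ₁ : 0 < δ₁)
    (μP : Measure (Fin (r - 1) → ℝ)) [IsProbabilityMeasure μP]
    (hμP : μP = volume.withDensity fun x => ENNReal.ofReal (f x))
    (hf0 : ∀ x ∉ simplexRegion (r - 1), f x = 0)
    (hf : ∀ x ∈ simplexRegion (r - 1), δ₁ < f x ∧ f x < δ₂)
    (m l : ℕ → ℕ) (c c' α : ℝ) (hc : 0 < c) (hc' : 0 < c') (hα : 0 < α)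
    (hm : ∀ n : ℕ, m n = ⌈c * (n : ℝ) ^ (2 / ((r : ℝ) - 1) + α)⌉₊)
    (hl : ∀ n : ℕ, l n = ⌈c' * (n : ℝ) ^ (2 / ((r : ℝ) - 1) + α)⌉₊)
    (Ω : ℕ → Type) (mΩ : ∀ n, MeasurableSpace (Ω n))
    (μ : ∀ n, Measure (Ω n)) (hμ : ∀ n, IsProbabilityMeasure (μ n))
    (P : ∀ n, Ω n → Fin n → Fin (r - 1) → ℝ)
    (X : ∀ n, Ω n → Fin n → Fin (m n) → Fin r)
    (W : ∀ n, Ω n → Fin n → Fin (l n) → Fin r)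
    (hP : ∀ n, Measurable (P n)) (hX : ∀ n, Measurable (X n))
    (hW : ∀ n, Measurable (W n))
    (hlaw : ∀ n, Measure.map (fun ω => (P n ω, X n ω, W n ω)) (μ n) =
      rStateLaw n (m n) (l n) r μP) :
    Tendsto (fun n =>
        (μ n {ω | ∃ (hn : 0 < n) (u : Fin n), u ≠ ⟨0, hn⟩ ∧
            ∀ i : Fin r, (i : ℕ) ≠ 0 →
              |empFreq (X n ω u) i - empFreq (W n ω ⟨0, hn⟩) i| ≤
                (n : ℝ) ^ (-(1 / ((r : ℝ) - 1) + α / 4))}).toReal)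
      atTop (nhds 0) := by
  have : NeZero r := ⟨by omega⟩
  have hcast : ((r - 1 : ℕ) : ℝ) = (r : ℝ) - 1 := by simp [Nat.cast_sub (one_le_two.trans hr)]
  have hr' : (0 : ℝ) < (r : ℝ) - 1 := hcast ▸ Nat.cast_pos.2 (by omega)
  have hsupp : ∀ᵐ p ∂μP, fullProb r p ∈ stdSimplex ℝ (Fin r) :=
    hμP ▸ ae_withDensity_fullProb_mem_stdSimplex fun x hx => by simp [hf0 x hx]
  have hball (x ρ) (hρ : 0 ≤ ρ) :
      μP.real (Metric.closedBall x ρ) ≤ |δ₂| * 2 ^ (r - 1) * ρ ^ ((r : ℝ) - 1) := by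
    simpa [hμP, mul_pow, mul_assoc, ← hcast] using
      withDensity_ofReal_real_closedBall_le hf0 (fun x hx => (hf x hx).2.le) x hρ
  refine (ENNReal.tendsto_toReal ENNReal.zero_ne_top).comp
    (r_state_other_users_freq_far_general hsupp hball ?_ ?_ hc hc'
      (.of_forall fun n => hm n ▸ Nat.le_ceil _) (.of_forall fun n => hl n ▸ Nat.le_ceil _)
      fun n => ⟨((hP n).prodMk ((hX n).prodMk (hW n))).aemeasurable, hlaw n⟩)
  · rw [add_mul, one_div_mul_cancel hr'.ne']
    linarith [mul_pos hα hr']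
  · linear_combination hα / 2
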